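/- arXiv:2203.07578 — 5 statements merged into one kernel-verified Lean document; each statement's English description precedes it below -/
import Mathlib

section
/- Let d ≥ 1, n ≥ 1, let A ⊂ ℤ be a finite set with |A| = d+2, and let z ∈ ℝ with z ≠ 0. Let V : ℤ → ℝ^{d+1} be such that for every k ∈ ℤ, every (d+1)-element subfamily of the family (V_{k+j})_{j∈A} is linearly independent. Let β : ℤ → ℝ satisfy β_k ≠ 0 and β_{k+n} = z·β_k for all k. Let a, a' : ℤ → (A → ℝ) be n-periodic (a_{k+n} = a_k and a'_{k+n} = a'_k for all k), with a_k and a'_k not identically zero for every k, and suppose ∑_{j∈A} a_k(j) • V_{k+j} = 0 and ∑_{j∈A} a'_k(j)·β_{k+j} • V_{k+j} = 0 for all k ∈ ℤ. Then there exists α : ℤ → ℝ with α_k ≠ 0 for all k, such that a'_k(j)·β_{k+j} = α_k·a_k(j) for all k ∈ ℤ, j ∈ A, and α_{k+n} = z·α_k for all k ∈ ℤ. -/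
/-- Proposition 2.1 in linear form. The `n`-periodic coefficient families
`a, a'` of the relations `∑_{j∈A} a_k(j) V_{k+j} = 0` and
`∑_{j∈A} a'_k(j) β_{k+j} V_{k+j} = 0` differ by a nowhere-vanishing scalar sequence `α`
that is quasi-periodic with the same monodromy `z` as `β`. -/
theorem statement2 (d n : ℕ) (hd : 1 ≤ d) (hn : 1 ≤ n) (A : Finset ℤ) (hA : A.card = d + 2)
    (z : ℝ) (hz : z ≠ 0)
    (V : ℤ → Fin (d + 1) → ℝ)
    (hgen : ∀ k : ℤ, ∀ s ⊆ A, s.card = d + 1 →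
      LinearIndependent ℝ (fun j : s => V (k + (j : ℤ))))
    (β : ℤ → ℝ) (hβ0 : ∀ k : ℤ, β k ≠ 0) (hβq : ∀ k : ℤ, β (k + n) = z * β k)
    (a a' : ℤ → ℤ → ℝ)
    (hper : ∀ k : ℤ, ∀ j ∈ A, a (k + n) j = a k j)
    (hper' : ∀ k : ℤ, ∀ j ∈ A, a' (k + n) j = a' k j)
    (hnz : ∀ k : ℤ, ∃ j ∈ A, a k j ≠ 0)
    (hnz' : ∀ k : ℤ, ∃ j ∈ A, a' k j ≠ 0)
    (ha : ∀ k : ℤ, ∑ j ∈ A, a k j • V (k + j) = 0)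
    (ha' : ∀ k : ℤ, ∑ j ∈ A, (a' k j * β (k + j)) • V (k + j) = 0) :
    ∃ α : ℤ → ℝ, (∀ k : ℤ, α k ≠ 0) ∧
      (∀ k : ℤ, ∀ j ∈ A, a' k j * β (k + j) = α k * a k j) ∧
      (∀ k : ℤ, α (k + n) = z * α k) := by
  have key : ∀ k : ℤ, ∀ c : ℤ → ℝ, ∑ j ∈ A, c j • V (k + j) = 0 →
      ∀ j0 ∈ A, c j0 = 0 → ∀ j ∈ A, c j = 0 := by
    intro k c hc j0 hj0 h0 j hj
    by_cases hjj : j = j0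
    · rw [hjj, h0]
    have hcard : (A.erase j0).card = d + 1 := by
      rw [Finset.card_erase_of_mem hj0, hA]; rfl
    have hli := hgen k (A.erase j0) (Finset.erase_subset _ _) hcard
    rw [Fintype.linearIndependent_iff] at hli
    have hsum : ∑ i : (A.erase j0), c i • V (k + (i : ℤ)) = 0 := by
      rw [Finset.sum_coe_sort (A.erase j0) (fun i => c i • V (k + i))]
      rw [← Finset.add_sum_erase A _ hj0, h0, zero_smul, zero_add] at hc
      exact hc
    exact hli (fun i => c i) hsum ⟨j, Finset.mem_erase.mpr ⟨hjj, hj⟩⟩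
  have hex : ∀ k : ℤ, ∃ t : ℝ, ∀ j ∈ A, a' k j * β (k + j) = t * a k j := by
    intro k
    obtain ⟨j0, hj0, h0⟩ := hnz k
    refine ⟨a' k j0 * β (k + j0) / a k j0, fun j hj => ?_⟩
    have h := key k (fun j => a' k j * β (k + j) - a' k j0 * β (k + j0) / a k j0 * a k j) ?_ j0 hj0
      ?_ j hj
    · exact sub_eq_zero.mp h
    · simp only [sub_smul, Finset.sum_sub_distrib, ha', mul_smul (_ / _), ← Finset.smul_sum, ha,
        smul_zero, sub_zero]
    · rw [div_mul_cancel₀ _ h0, sub_self]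
  choose α hα using hex
  refine ⟨α, fun k hk => ?_, hα, fun k => ?_⟩
  · obtain ⟨j, hj, h⟩ := hnz' k
    have := hα k j hj
    rw [hk, zero_mul] at this
    exact mul_ne_zero h (hβ0 _) this
  · obtain ⟨j, hj, h⟩ := hnz k
    have h1 := hα k j hj
    have h2 := hα (k + n) j hj
    rw [hper k j hj, hper' k j hj, show k + (n : ℤ) + j = k + j + n by ring, hβq] at h2
    apply mul_right_cancel₀ h
    rw [← h2, mul_assoc, ← h1]
    ring
end

section
/- Let m ≥ 1 and let A_+, A_- ⊂ ℤ be disjoint arithmetic progressions with common difference m, each containing at least two elements; set A := A_+ ∪ A_- and d := |A_+| + |A_-| − 2. Let V : ℤ → ℝ^{d+1} be a sequence such that for every k ∈ ℤ, the family (V_{k+l})_{l ∈ A_+ + A_-}, indexed by the (d+1)-element Minkowski sum A_+ + A_-, is linearly independent. Suppose a : ℤ → (A → ℝ) satisfies ∑_{j∈A} a_k(j) • V_{k+j} = 0 for all k ∈ ℤ. Define W : ℤ → ℝ^{d+1} by W_k := ∑_{j∈A_+} a_k(j) • V_{k+j}, and suppose ã : ℤ → (A → ℝ) satisfies ∑_{j∈A}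 ã_k(j) • W_{k+j} = 0 for all k ∈ ℤ. Then for every k ∈ ℤ and every l ∈ ℤ, ∑_{i∈A_+, j∈A_-, i+j=l} ã_k(i)·a_{k+i}(j) = ∑_{i∈A_-, j∈A_+, i+j=l} ã_k(i)·a_{k+i}(j). -/
open scoped Pointwise

/-- A finite set `A ⊆ ℤ` is an arithmetic progression with common difference `m`
if `A = {a + i·m : 0 ≤ i ≤ s}` for some `a ∈ ℤ` and integer `s ≥ 0`. -/
def IsAPWith (m : ℤ) (A : Finset ℤ) : Prop :=
  ∃ a : ℤ, ∃ s : ℕ, A = (Finset.range (s + 1)).image (fun i : ℕ => a + (i : ℤ) * m)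

theorem regroup_aux {n : ℕ} (P Q S : Finset ℤ) (hS : ∀ i ∈ P, ∀ j ∈ Q, i + j ∈ S)
    (f : ℤ → ℤ → ℝ) (V : ℤ → Fin n → ℝ) (k : ℤ) :
    ∑ l ∈ S, (∑ i ∈ P, ∑ j ∈ Q, if i + j = l then f i j else 0) • V (k + l) =
      ∑ i ∈ P, ∑ j ∈ Q, f i j • V (k + i + j) := by
  simp only [Finset.sum_smul]
  rw [Finset.sum_comm]
  refine Finset.sum_congr rfl fun i hi => ?_
  rw [Finset.sum_comm]
  refine Finset.sum_congr rfl fun j hj => ?_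
  simp only [ite_smul, zero_smul]
  rw [Finset.sum_ite_eq, if_pos (hS i hi j hj), add_assoc]

/-- Theorem 2.2, the operator identity `𝒟̃₊𝒟₋ = 𝒟̃₋𝒟₊` coefficient by
coefficient. Here `a` encodes the relation `∑_{j∈A} a_k(j) V_{k+j} = 0` of the original
polygon, `W_k = ∑_{j∈A₊} a_k(j) V_{k+j}` are lifted vertices of the image polygon, and
`ã` encodes the relation for `W`. -/
theorem statement4 (m : ℤ) (hm : 1 ≤ m) (Ap Am : Finset ℤ)
    (hAPp : IsAPWith m Ap) (hAPm : IsAPWith m Am) (hdisj : Disjoint Ap Am)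
    (h2p : 2 ≤ Ap.card) (h2m : 2 ≤ Am.card)
    (d : ℕ) (hd : d = Ap.card + Am.card - 2)
    (V : ℤ → Fin (d + 1) → ℝ)
    (hgen : ∀ k : ℤ, LinearIndependent ℝ (fun l : (Ap + Am : Finset ℤ) => V (k + (l : ℤ))))
    (a : ℤ → ℤ → ℝ)
    (ha : ∀ k : ℤ, ∑ j ∈ Ap ∪ Am, a k j • V (k + j) = 0)
    (W : ℤ → Fin (d + 1) → ℝ)
    (hW : ∀ k : ℤ, W k = ∑ j ∈ Ap, a k j • V (k + j))
    (ta : ℤ → ℤ → ℝ)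
    (hta : ∀ k : ℤ, ∑ j ∈ Ap ∪ Am, ta k j • W (k + j) = 0) :
    ∀ k l : ℤ,
      (∑ i ∈ Ap, ∑ j ∈ Am, if i + j = l then ta k i * a (k + i) j else 0) =
      (∑ i ∈ Am, ∑ j ∈ Ap, if i + j = l then ta k i * a (k + i) j else 0) := by
  intro k l
  by_cases hl : l ∈ Ap + Am
  · have hWm : ∀ k : ℤ, W k = - ∑ j ∈ Am, a k j • V (k + j) := by
      intro k
      have h := ha k
      rw [Finset.sum_union hdisj, ← hW k] at h
      exact eq_neg_of_add_eq_zero_left h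
    have e1 := regroup_aux Ap Am (Ap + Am) (fun i hi j hj => Finset.add_mem_add hi hj)
      (fun i j => ta k i * a (k + i) j) V k
    have e2 := regroup_aux Am Ap (Ap + Am)
      (fun i hi j hj => add_comm j i ▸ Finset.add_mem_add hj hi)
      (fun i j => ta k i * a (k + i) j) V k
    have h := hta k
    rw [Finset.sum_union hdisj] at h
    have f1 : ∑ i ∈ Ap, ta k i • W (k + i) =
        - ∑ i ∈ Ap, ∑ j ∈ Am, (ta k i * a (k + i) j) • V (k + i + j) := by
      rw [← Finset.sum_neg_distrib]
      refine Finset.sum_congr rfl fun i _ => ?_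
      rw [hWm, smul_neg, Finset.smul_sum]
      simp only [smul_smul]
    have f2 : ∑ i ∈ Am, ta k i • W (k + i) =
        ∑ i ∈ Am, ∑ j ∈ Ap, (ta k i * a (k + i) j) • V (k + i + j) := by
      refine Finset.sum_congr rfl fun i _ => ?_
      rw [hW, Finset.smul_sum]
      simp only [smul_smul]
    rw [f1, f2, ← e1, ← e2, neg_add_eq_zero, ← sub_eq_zero, ← Finset.sum_sub_distrib] at h
    simp only [← sub_smul] at h
    rw [← Finset.sum_coe_sort] at h
    have hz := Fintype.linearIndependent_iff.mp (hgen k) _ h ⟨l, hl⟩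
    exact sub_eq_zero.mp hz
  · rw [Finset.sum_eq_zero, Finset.sum_eq_zero]
    · intro i hi
      refine Finset.sum_eq_zero fun j hj => if_neg ?_
      rintro rfl
      exact hl (add_comm j i ▸ Finset.add_mem_add hj hi)
    · intro i hi
      refine Finset.sum_eq_zero fun j hj => if_neg ?_
      rintro rfl
      exact hl (Finset.add_mem_add hi hj)
end

section
/- Let m ≥ 1 and let A_+, A_- ⊂ ℤ be disjoint arithmetic progressions with common difference m, each containing at least two elements. Define B_+ := {min A_+ − i·m : 0 ≤ i ≤ |A_-| − 2} and B_- := {min A_- − i·m : 0 ≤ i ≤ |A_+| − 2}. Then B_+ and B_- are nonempty disjoint arithmetic progressions with common difference m which are non-consecutive, i.e. max B_+ + m ≠ min B_- and max B_- + m ≠ min B_+. -/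
theorem ap_card (m : ℤ) (hm : 1 ≤ m) (a : ℤ) (s : ℕ) :
    ((Finset.range (s + 1)).image (fun i : ℕ => a + (i : ℤ) * m)).card = s + 1 := by
  rw [Finset.card_image_of_injective, Finset.card_range]
  intro i j hij
  have h : (i : ℤ) * m = j * m := by simpa using hij
  have h' := mul_right_cancel₀ (by omega : m ≠ 0) h
  exact_mod_cast h'

theorem ap_min (m : ℤ) (hm : 1 ≤ m) (a : ℤ) (s : ℕ) (A : Finset ℤ)
    (hA : A = (Finset.range (s + 1)).image (fun i : ℕ => a + (i : ℤ) * m)) (h : A.Nonempty) :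
    A.min' h = a := by
  subst hA
  apply le_antisymm
  · apply Finset.min'_le
    exact Finset.mem_image.mpr ⟨0, by simp, by simp⟩
  · apply Finset.le_min'
    intro y hy
    obtain ⟨i, -, rfl⟩ := Finset.mem_image.mp hy
    have : 0 ≤ (i : ℤ) * m := by positivity
    omega

theorem ap_max (m : ℤ) (hm : 1 ≤ m) (c : ℤ) (s : ℕ) (A : Finset ℤ)
    (hA : A = (Finset.range (s + 1)).image (fun i : ℕ => c - (i : ℤ) * m)) (h : A.Nonempty) :
    A.max' h = c := by
  subst hA
  apply le_antisymm
  · apply Finset.max'_le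
    intro y hy
    obtain ⟨i, -, rfl⟩ := Finset.mem_image.mp hy
    have : 0 ≤ (i : ℤ) * m := by positivity
    omega
  · apply Finset.le_max'
    exact Finset.mem_image.mpr ⟨0, by simp, by simp⟩

theorem ap_rev (m c : ℤ) (s : ℕ) :
    (Finset.range (s + 1)).image (fun i : ℕ => c - (i : ℤ) * m) =
    (Finset.range (s + 1)).image (fun i : ℕ => (c - s * m) + (i : ℤ) * m) := by
  ext x
  simp only [Finset.mem_image, Finset.mem_range]
  constructor
  · rintro ⟨i, hi, rfl⟩
    refine ⟨s - i, by omega, ?_⟩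
    rw [Nat.cast_sub (by omega)]; ring
  · rintro ⟨i, hi, rfl⟩
    refine ⟨s - i, by omega, ?_⟩
    rw [Nat.cast_sub (by omega)]; ring

/-- Well-definedness of the map φ of Proposition 3.1. From disjoint
arithmetic progressions `A₊, A₋` with common difference `m`, each with at least two
elements, the sets `B₊ = {min A₊ − i·m : 0 ≤ i ≤ |A₋|−2}` and
`B₋ = {min A₋ − i·m : 0 ≤ i ≤ |A₊|−2}` are nonempty disjoint arithmetic progressions
with common difference `m` which are non-consecutive. -/
theorem statement5 (m : ℤ) (hm : 1 ≤ m) (Ap Am : Finset ℤ)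
    (hAPp : IsAPWith m Ap) (hAPm : IsAPWith m Am) (hdisj : Disjoint Ap Am)
    (h2p : 2 ≤ Ap.card) (h2m : 2 ≤ Am.card)
    (Bp Bm : Finset ℤ)
    (hBp : Bp = (Finset.range (Am.card - 1)).image
      (fun i : ℕ => Ap.min' (Finset.card_pos.mp (by omega)) - (i : ℤ) * m))
    (hBm : Bm = (Finset.range (Ap.card - 1)).image
      (fun i : ℕ => Am.min' (Finset.card_pos.mp (by omega)) - (i : ℤ) * m)) :
    ∃ (h₁ : Bp.Nonempty) (h₂ : Bm.Nonempty),
      Disjoint Bp Bm ∧ IsAPWith m Bp ∧ IsAPWith m Bm ∧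
      Bp.max' h₁ + m ≠ Bm.min' h₂ ∧ Bm.max' h₂ + m ≠ Bp.min' h₁ := by
  obtain ⟨a, s, hA⟩ := hAPp
  obtain ⟨b, t, hB⟩ := hAPm
  have cA : Ap.card = s + 1 := by rw [hA]; exact ap_card m hm a s
  have cB : Am.card = t + 1 := by rw [hB]; exact ap_card m hm b t
  rw [ap_min m hm a s Ap hA, cB] at hBp
  rw [ap_min m hm b t Am hB, cA] at hBm
  obtain ⟨s, rfl⟩ : ∃ k, s = k + 1 := ⟨s - 1, by omega⟩
  obtain ⟨t, rfl⟩ : ∃ k, t = k + 1 := ⟨t - 1, by omega⟩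
  simp only [Nat.add_sub_cancel] at hBp hBm
  have key : ∀ i j : ℕ, i ≤ s + 1 → j ≤ t + 1 → a + (i : ℤ) * m ≠ b + (j : ℤ) * m := by
    intro i j hi hj he
    refine (Finset.disjoint_left.mp hdisj : ∀ ⦃x⦄, x ∈ Ap → x ∉ Am) (?_ : a + (i : ℤ) * m ∈ Ap) ?_
    · rw [hA]; exact Finset.mem_image.mpr ⟨i, by simp; omega, rfl⟩
    · rw [hB]; exact Finset.mem_image.mpr ⟨j, by simp; omega, he.symm⟩
  have rp := hBp.trans (ap_rev m a t)
  have rm := hBm.trans (ap_rev m b s)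
  have h₁ : Bp.Nonempty := by rw [hBp]; simp
  have h₂ : Bm.Nonempty := by rw [hBm]; simp
  refine ⟨h₁, h₂, ?_, ⟨_, _, rp⟩, ⟨_, _, rm⟩, ?_, ?_⟩
  · rw [Finset.disjoint_left]
    intro x hx hy
    rw [hBp] at hx
    rw [hBm] at hy
    simp only [Finset.mem_image, Finset.mem_range] at hx hy
    obtain ⟨i, hi, rfl⟩ := hx
    obtain ⟨j, hj, he⟩ := hy
    rcases le_total i j with h | h
    · apply key (j - i) 0 (by omega) (by omega)
      rw [Nat.cast_sub h]; push_cast; linarith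
    · apply key 0 (i - j) (by omega) (by omega)
      rw [Nat.cast_sub h]; push_cast; linarith
  · rw [ap_max m hm a t Bp hBp, ap_min m hm _ s Bm rm]
    intro h
    apply key (s + 1) 0 (by omega) (by omega)
    push_cast; linarith
  · rw [ap_max m hm b s Bm hBm, ap_min m hm _ t Bp rp]
    intro h
    apply key 0 (t + 1) (by omega) (by omega)
    push_cast; linarith
end

section
/- Let m ≥ 1, d ≥ 1, and let B ⊂ ℤ be a nonempty arithmetic progression with common difference m satisfying |B| ≤ d. Let V : ℤ → ℝ^{d+1} be in general position, i.e. for every finite set S ⊆ ℤ with |S| ≤ d+1 the family (V_i)_{i∈S} is linearly independent. Then for every k ∈ ℤ, ⋂_{j∈B} span_ℝ {V_{k+j+i·m} : 0 ≤ i ≤ d−1} = span_ℝ {V_{k+c} : c ∈ C}, where C := {max B + i·m : 0 ≤ i ≤ d − |B|}. -/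
theorem aux_inf {ι M : Type*} [AddCommGroup M] [Module ℝ M] (v : ι → M) (s t : Set ι)
    (h : LinearIndepOn ℝ v (s ∪ t)) :
    Submodule.span ℝ (v '' s) ⊓ Submodule.span ℝ (v '' t) = Submodule.span ℝ (v '' (s ∩ t)) := by
  apply le_antisymm
  · rintro x ⟨hx, hy⟩
    obtain ⟨f, hf, rfl⟩ := (Finsupp.mem_span_image_iff_linearCombination ℝ).1 hx
    obtain ⟨g, hg, hfg⟩ := (Finsupp.mem_span_image_iff_linearCombination ℝ).1 hy
    have : g = f := linearIndepOn_iffₛ.1 h g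
      (Finsupp.supported_mono Set.subset_union_right hg) f
      (Finsupp.supported_mono Set.subset_union_left hf) hfg
    subst this
    refine (Finsupp.mem_span_image_iff_linearCombination ℝ).2 ⟨g, ?_, rfl⟩
    rw [Finsupp.supported_inter]
    exact ⟨hf, hg⟩
  · exact le_inf (Submodule.span_mono (Set.image_mono Set.inter_subset_left))
      (Submodule.span_mono (Set.image_mono Set.inter_subset_right))

theorem aux_main {M : Type*} [AddCommGroup M] [Module ℝ M] (d : ℕ) (W : ℕ → M)
    (h : ∀ s : ℕ, LinearIndepOn ℝ W (Set.Ico s (s + d + 1))) (s : ℕ) (hs : s < d) :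
    (⨅ t ∈ Finset.range (s + 1), Submodule.span ℝ (W '' Set.Ico t (t + d))) =
      Submodule.span ℝ (W '' Set.Ico s d) := by
  induction s with
  | zero => simp
  | succ s ih =>
    rw [Finset.range_add_one, Finset.iInf_insert, ih (by omega), inf_comm, aux_inf]
    · congr 2
      ext x
      simp only [Set.mem_inter_iff, Set.mem_Ico]
      omega
    · refine (h s).mono ?_
      intro x
      simp only [Set.mem_union, Set.mem_Ico]
      omega

/-- For a sequence `V : ℤ → ℝ^{d+1}` in general position, the intersection
of the `m`-diagonal hyperplanes `span⟨V_{k+j}, V_{k+j+m}, …, V_{k+j+m(d−1)}⟩` over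
`j ∈ B` equals the span of the vertices indexed by
`C = {max B + i·m : 0 ≤ i ≤ d − |B|}`. -/
theorem statement9 (m : ℤ) (hm : 1 ≤ m) (d : ℕ) (hd : 1 ≤ d)
    (B : Finset ℤ) (hne : B.Nonempty) (hAP : IsAPWith m B) (hcard : B.card ≤ d)
    (V : ℤ → Fin (d + 1) → ℝ)
    (hgen : ∀ S : Finset ℤ, S.card ≤ d + 1 → LinearIndependent ℝ (fun i : S => V i)) :
    ∀ k : ℤ,
      (⨅ j ∈ B, Submodule.span ℝ (Set.range fun i : Fin d => V (k + j + (i : ℤ) * m))) =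
      Submodule.span ℝ ((fun c => V (k + c)) ''
        ((Finset.range (d - B.card + 1)).image
          (fun i : ℕ => B.max' hne + (i : ℤ) * m) : Set ℤ)) := by
  intro k
  obtain ⟨a, s, rfl⟩ := hAP
  have hm0 : m ≠ 0 := by omega
  have hinj : ∀ c : ℤ, Function.Injective (fun i : ℕ => c + (i : ℤ) * m) := by
    intro c x y hxy
    simpa [hm0] using hxy
  have hc : ((Finset.range (s + 1)).image (fun i : ℕ => a + (i : ℤ) * m)).card = s + 1 := by
    rw [Finset.card_image_of_injective _ (hinj a), Finset.card_range]
  have hmax : ((Finset.range (s + 1)).image (fun i : ℕ => a + (i : ℤ) * m)).max' hne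
      = a + (s : ℤ) * m := by
    apply le_antisymm
    · apply Finset.max'_le
      intro y hy
      obtain ⟨i, hi, rfl⟩ := Finset.mem_image.1 hy
      have : (i : ℤ) ≤ s := by
        have := Finset.mem_range.1 hi
        omega
      nlinarith
    · apply Finset.le_max'
      exact Finset.mem_image.2 ⟨s, Finset.self_mem_range_succ s, rfl⟩
  rw [hmax, hc]
  rw [hc] at hcard
  have key := aux_main d (fun n : ℕ => V (k + a + (n : ℤ) * m)) (by
    intro t
    have h1 := hgen ((Finset.Ico t (t + d + 1)).image (fun i : ℕ => k + a + (i : ℤ) * m)) (by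
      refine Finset.card_image_le.trans ?_
      simp
      omega)
    exact h1.comp (fun i : Set.Ico t (t + d + 1) =>
      ⟨k + a + ((i : ℕ) : ℤ) * m, Finset.mem_image.2 ⟨i, Finset.mem_Ico.2 i.2, rfl⟩⟩) (by
        intro x y hxy
        exact Subtype.ext (hinj (k + a) (congrArg Subtype.val hxy)))) s (by omega)
  rw [Finset.iInf_finset_image]
  convert key using 1
  · refine iInf_congr fun t => iInf_congr fun _ => ?_
    congr 1
    ext x
    constructor
    · rintro ⟨i, rfl⟩
      refine ⟨t + i, by simp, ?_⟩
      dsimp only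
      congr 1
      push_cast
      ring
    · rintro ⟨n, ⟨h1, h2⟩, rfl⟩
      obtain ⟨i, rfl⟩ := Nat.exists_eq_add_of_le h1
      refine ⟨⟨i, by omega⟩, ?_⟩
      dsimp only
      congr 1
      push_cast
      ring
  · congr 1
    ext x
    constructor
    · rintro ⟨c, hc', rfl⟩
      obtain ⟨i, hi, rfl⟩ := Finset.mem_image.1 (Finset.mem_coe.1 hc')
      have := Finset.mem_range.1 hi
      refine ⟨s + i, ⟨by omega, by omega⟩, ?_⟩
      dsimp only
      congr 1
      push_cast
      ring
    · rintro ⟨n, ⟨h1, h2⟩, rfl⟩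
      obtain ⟨i, rfl⟩ := Nat.exists_eq_add_of_le h1
      refine ⟨a + (s : ℤ) * m + (i : ℤ) * m,
        Finset.mem_coe.2 (Finset.mem_image.2 ⟨i, Finset.mem_range.2 (by omega), rfl⟩), ?_⟩
      dsimp only
      congr 1
      push_cast
      ring
end

section
/- Let m ≥ 1 and let A_+, A_- ⊂ ℤ be disjoint arithmetic progressions with common difference m, each containing at least two elements; set d := |A_+| + |A_-| − 2. Define B_+ := {min A_+ − i·m : 0 ≤ i ≤ |A_-| − 2} and B_- := {min A_- − i·m : 0 ≤ i ≤ |A_+| − 2}. Let V : ℤ → ℝ^{d+1} be in general position, i.e. for every finite set S ⊆ ℤ with |S| ≤ d+1 the family (V_i)_{i∈S} is linearly independent. Then for every k ∈ ℤ, ⋂_{j ∈ B_+ ∪ B_-} span_ℝ {V_{k+j+i·m} : 0 ≤ i ≤ d−1} = span_ℝ {V_{k+j} : j ∈ A_+} ⊓ span_ℝ {V_{k+j} : j ∈ A_-}, and this subspace of ℝ^{d+1} is one-dimensional. -/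
theorem span_inf_aux {ι E : Type*} [AddCommGroup E] [Module ℝ E] (v : ι → E) (s t : Set ι)
    (h : LinearIndepOn ℝ v (s ∪ t)) :
    Submodule.span ℝ (v '' s) ⊓ Submodule.span ℝ (v '' t) = Submodule.span ℝ (v '' (s ∩ t)) := by
  apply le_antisymm
  · rintro x ⟨hx1, hx2⟩
    simp only [SetLike.mem_coe] at hx1 hx2
    rw [Finsupp.mem_span_image_iff_linearCombination] at hx1 hx2 ⊢
    obtain ⟨f, hf, rfl⟩ := hx1
    obtain ⟨g, hg, hgf⟩ := hx2
    have := linearIndepOn_iffₛ.mp h g (Finsupp.supported_mono Set.subset_union_right hg) f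
      (Finsupp.supported_mono Set.subset_union_left hf) hgf
    subst this
    refine ⟨g, ?_, rfl⟩
    rw [Finsupp.supported_inter]
    exact ⟨hf, hg⟩
  · exact le_inf (Submodule.span_mono (Set.image_mono Set.inter_subset_left))
      (Submodule.span_mono (Set.image_mono Set.inter_subset_right))

theorem iInf_window_aux {E : Type*} [AddCommGroup E] [Module ℝ E] (U : ℤ → E) (d : ℕ)
    (hU : ∀ S : Finset ℤ, S.card ≤ d + 1 → LinearIndepOn ℝ U (S : Set ℤ)) (r : ℕ) (hr : r < d) :
    (⨅ i ∈ Finset.range (r + 1),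
      Submodule.span ℝ (U '' (Set.Ico (-(i : ℤ)) (-(i : ℤ) + d)))) =
    Submodule.span ℝ (U '' (Set.Ico (0 : ℤ) (d - r))) := by
  induction r with
  | zero => simp
  | succ r ih =>
    rw [Finset.range_add_one, Finset.iInf_insert, ih (by omega), span_inf_aux]
    · congr 2
      ext x
      simp only [Set.mem_inter_iff, Set.mem_Ico]
      push_cast
      omega
    · have := hU (Finset.Ico (-((r : ℤ) + 1)) (d - r)) (by simp)
      refine this.mono ?_
      intro x
      simp only [Set.mem_union, Set.mem_Ico, Finset.coe_Ico]
      push_cast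
      omega

theorem diag_aux (m : ℤ) (hm : 1 ≤ m) {E : Type*} [AddCommGroup E] [Module ℝ E] (V : ℤ → E)
    (a k : ℤ) (s r d : ℕ) (hd : d = s + 1 + r)
    (hgen : ∀ S : Finset ℤ, S.card ≤ d + 1 → LinearIndepOn ℝ V (S : Set ℤ)) :
    (⨅ j ∈ (Finset.range (r + 1)).image (fun i : ℕ => a - (i : ℤ) * m),
      Submodule.span ℝ (Set.range fun i : Fin d => V (k + j + (i : ℤ) * m))) =
    Submodule.span ℝ ((fun j => V (k + j)) ''
      (((Finset.range (s + 1)).image (fun i : ℕ => a + (i : ℤ) * m) : Finset ℤ) : Set ℤ)) := by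
  have hinj : Function.Injective (fun i : ℤ => k + a + i * m) := by
    intro x y hxy
    have : x * m = y * m := by simpa using hxy
    exact mul_right_cancel₀ (by omega) this
  have key := iInf_window_aux (fun i : ℤ => V (k + a + i * m)) d (by
    intro S hS
    have h1 := hgen (S.image (fun i : ℤ => k + a + i * m))
      (Finset.card_image_le.trans hS)
    rw [Finset.coe_image] at h1
    exact h1.comp_of_image hinj.injOn) r (by omega)
  rw [Finset.iInf_finset_image]
  convert key using 1
  · refine iInf_congr fun i => iInf_congr fun _ => ?_
    congr 1
    ext x
    simp only [Set.mem_range, Set.mem_image, Set.mem_Ico]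
    constructor
    · rintro ⟨j, rfl⟩
      refine ⟨-(i : ℤ) + j, by have := j.2; omega, ?_⟩
      congr 1; ring
    · rintro ⟨y, hy, rfl⟩
      refine ⟨⟨(y + i).toNat, by omega⟩, ?_⟩
      have : (((y + i).toNat : ℕ) : ℤ) = y + i := by omega
      simp only [this]
      congr 1; ring
  · congr 1
    ext x
    simp only [Set.mem_image, Set.mem_Ico, Finset.coe_image, Finset.coe_range, Set.mem_Iio]
    constructor
    · rintro ⟨_, ⟨i, hi, rfl⟩, rfl⟩
      refine ⟨i, by omega, ?_⟩
      congr 1; ring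
    · rintro ⟨y, hy, rfl⟩
      refine ⟨_, ⟨y.toNat, by omega, rfl⟩, ?_⟩
      have : ((y.toNat : ℕ) : ℤ) = y := by omega
      simp only [this]
      congr 1; ring

theorem ap_aux (m : ℤ) (hm : 1 ≤ m) (A : Finset ℤ) (h : IsAPWith m A) :
    ∃ a : ℤ, ∃ s : ℕ, A = (Finset.range (s + 1)).image (fun i : ℕ => a + (i : ℤ) * m) ∧
      A.card = s + 1 ∧ ∀ hA : A.Nonempty, A.min' hA = a := by
  obtain ⟨a, s, rfl⟩ := h
  refine ⟨a, s, rfl, ?_, ?_⟩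
  · rw [Finset.card_image_of_injective, Finset.card_range]
    intro x y hxy
    have : (x : ℤ) * m = y * m := by simpa using hxy
    exact_mod_cast mul_right_cancel₀ (by omega) this
  · intro hA
    apply le_antisymm
    · apply Finset.min'_le
      simp only [Finset.mem_image, Finset.mem_range]
      exact ⟨0, by omega, by simp⟩
    · apply Finset.le_min'
      intro y hy
      simp only [Finset.mem_image, Finset.mem_range] at hy
      obtain ⟨i, _, rfl⟩ := hy
      have : 0 ≤ (i : ℤ) * m := by positivity
      omega

theorem finrank_aux {E : Type*} [AddCommGroup E] [Module ℝ E] (U : ℤ → E) (S : Finset ℤ)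
    (h : LinearIndepOn ℝ U (S : Set ℤ)) :
    Module.finrank ℝ (Submodule.span ℝ (U '' (S : Set ℤ))) = S.card := by
  have := finrank_span_eq_card (R := ℝ) (b := fun i : (S : Set ℤ) => U i) h
  rw [Set.image_eq_range]
  simpa using this

/-- Proposition 3.1 on the level of lifts: for a polygon in general
position, the intersection of the `m`-diagonal hyperplanes spaced out by `B₊ ∪ B₋`
(with `B₊ = {min A₊ − i·m : 0 ≤ i ≤ |A₋|−2}`, `B₋ = {min A₋ − i·m : 0 ≤ i ≤ |A₊|−2}`)
equals the intersection `span⟨V_{k+j} : j∈A₊⟩ ∩ span⟨V_{k+j} : j∈A₋⟩`, and this subspace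
is one-dimensional: the bi-diagonal map coincides with the long-diagonal map. -/
theorem statement14 (m : ℤ) (hm : 1 ≤ m) (Ap Am : Finset ℤ)
    (hAPp : IsAPWith m Ap) (hAPm : IsAPWith m Am) (hdisj : Disjoint Ap Am)
    (h2p : 2 ≤ Ap.card) (h2m : 2 ≤ Am.card)
    (d : ℕ) (hd : d = Ap.card + Am.card - 2)
    (Bp Bm : Finset ℤ)
    (hBp : Bp = (Finset.range (Am.card - 1)).image
      (fun i : ℕ => Ap.min' (Finset.card_pos.mp (by omega)) - (i : ℤ) * m))
    (hBm : Bm = (Finset.range (Ap.card - 1)).image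
      (fun i : ℕ => Am.min' (Finset.card_pos.mp (by omega)) - (i : ℤ) * m))
    (V : ℤ → Fin (d + 1) → ℝ)
    (hgen : ∀ S : Finset ℤ, S.card ≤ d + 1 → LinearIndependent ℝ (fun i : S => V i)) :
    ∀ k : ℤ,
      (⨅ j ∈ Bp ∪ Bm,
        Submodule.span ℝ (Set.range fun i : Fin d => V (k + j + (i : ℤ) * m))) =
      Submodule.span ℝ ((fun j => V (k + j)) '' (Ap : Set ℤ)) ⊓
        Submodule.span ℝ ((fun j => V (k + j)) '' (Am : Set ℤ)) ∧
      Module.finrank ℝ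
        ↥(Submodule.span ℝ ((fun j => V (k + j)) '' (Ap : Set ℤ)) ⊓
          Submodule.span ℝ ((fun j => V (k + j)) '' (Am : Set ℤ))) = 1 := by
  intro k
  obtain ⟨a, s, hA, hAc, hAm⟩ := ap_aux m hm Ap hAPp
  obtain ⟨b, t, hB, hBc, hBmn⟩ := ap_aux m hm Am hAPm
  obtain ⟨s, rfl⟩ : ∃ u, s = u + 1 := ⟨s - 1, by omega⟩
  obtain ⟨t, rfl⟩ : ∃ u, t = u + 1 := ⟨t - 1, by omega⟩
  simp only [hAm, hBc, Nat.add_sub_cancel] at hBp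
  simp only [hBmn, hAc, Nat.add_sub_cancel] at hBm
  have hgen2 : ∀ S : Finset ℤ, S.card ≤ d + 1 → LinearIndepOn ℝ V (S : Set ℤ) :=
    fun S hS => hgen S hS
  constructor
  · rw [Finset.iInf_union, hBp, hBm, diag_aux m hm V a k (s + 1) t d (by omega) hgen2,
      diag_aux m hm V b k (t + 1) s d (by omega) hgen2, ← hA, ← hB]
  · have hU : ∀ S : Finset ℤ, S.card ≤ d + 1 →
        LinearIndepOn ℝ (fun j => V (k + j)) (S : Set ℤ) := by
      intro S hS
      have h1 := hgen2 (S.image (fun i : ℤ => k + i)) (Finset.card_image_le.trans hS)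
      rw [Finset.coe_image] at h1
      exact h1.comp_of_image (add_right_injective k).injOn
    have h1 := finrank_aux _ Ap (hU Ap (by omega))
    have h2 := finrank_aux _ Am (hU Am (by omega))
    have h3 := Submodule.finrank_sup_add_finrank_inf_eq
      (Submodule.span ℝ ((fun j => V (k + j)) '' (Ap : Set ℤ)))
      (Submodule.span ℝ ((fun j => V (k + j)) '' (Am : Set ℤ)))
    have hc : (Ap ∪ Am).card = d + 2 := by
      rw [Finset.card_union_of_disjoint hdisj]; omega
    obtain ⟨S, hS, hSc⟩ := Finset.exists_subset_card_eq (s := Ap ∪ Am) (n := d + 1) (by omega)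
    have h4 := finrank_aux _ S (hU S (by omega))
    have h5 : Submodule.span ℝ ((fun j => V (k + j)) '' (S : Set ℤ)) ≤
        Submodule.span ℝ ((fun j => V (k + j)) '' (Ap : Set ℤ)) ⊔
        Submodule.span ℝ ((fun j => V (k + j)) '' (Am : Set ℤ)) := by
      rw [← Submodule.span_union, ← Set.image_union, ← Finset.coe_union]
      exact Submodule.span_mono (Set.image_mono (Finset.coe_subset.mpr hS))
    have h6 := Submodule.finrank_mono h5
    have h7 := Submodule.finrank_le (Submodule.span ℝ ((fun j => V (k + j)) '' (Ap : Set ℤ)) ⊔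
        Submodule.span ℝ ((fun j => V (k + j)) '' (Am : Set ℤ)))
    rw [Module.finrank_fin_fun] at h7
    omega
end
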